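/- Let U ⊆ ℂ be open with every connected component simply connected, and let f : U → ℂ be holomorphic. Let P ⊆ U be open with f(P) ⊆ P and with every connected component of P simply connected. Let B be the set of points z such that for some n ≥ 0 the orbit z, f(z), …, f^{n-1}(z) stays in U and fⁿ(z) ∈ P. Then every connected component of B is simply connected. -/

import Mathlib

open Set Filter Topology Metric

/-- no holes -/
def FullSet (S : Set ℂ) : Prop :=
  ∀ D : Set ℂ, IsOpen D → Bornology.IsBounded D → frontier D ⊆ S → D ⊆ S

lemma FullSet.comp {S : Set ℂ} (hS : IsOpen S) (h : FullSet S) (x : ℂ) :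
    FullSet (connectedComponentIn S x) := by
  intro D hDo hDb hD
  have hWS : connectedComponentIn S x ⊆ S := connectedComponentIn_subset S x
  have hDS : D ⊆ S := h D hDo hDb (hD.trans hWS)
  set W := connectedComponentIn S x with hW
  have hWo : IsOpen W := hS.connectedComponentIn
  have e : D \ W = closure D \ W := by
    ext z
    rw [closure_eq_self_union_frontier]
    simp only [Set.mem_sdiff, mem_union]
    constructor
    · rintro ⟨a, b⟩; exact ⟨Or.inl a, b⟩
    · rintro ⟨a | a, b⟩
      · exact ⟨a, b⟩
      · exact absurd (hD a) b
  have hcl : IsClosed (D \ W) := by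
    rw [e]; exact isClosed_closure.sdiff hWo
  have hop : IsOpen (D \ W) := by
    rw [isOpen_iff_mem_nhds]
    rintro z ⟨hz, hzW⟩
    filter_upwards [hDo.mem_nhds hz, hS.connectedComponentIn.mem_nhds
      (mem_connectedComponentIn (hDS hz))] with y hy hy'
    refine ⟨hy, fun hyW => hzW ?_⟩
    have h1 := connectedComponentIn_eq hyW
    have h2 := connectedComponentIn_eq hy'
    rw [hW, h1, ← h2]
    exact mem_connectedComponentIn (hDS hz)
  have := isClopen_iff.mp ⟨hcl, hop⟩
  rcases this with h0 | h0
  · exact sdiff_eq_empty.mp h0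
  · exfalso
    have : Bornology.IsBounded (univ : Set ℂ) := h0 ▸ hDb.subset sdiff_subset
    exact NormedSpace.unbounded_univ ℂ ℂ this

lemma FullSet.iUnion {B : ℕ → Set ℂ} (hm : Monotone B) (ho : ∀ n, IsOpen (B n))
    (h : ∀ n, FullSet (B n)) : FullSet (⋃ n, B n) := by
  intro D hDo hDb hD
  have hc : IsCompact (frontier D) :=
    isCompact_of_isClosed_isBounded isClosed_frontier
      (hDb.closure.subset frontier_subset_closure)
  obtain ⟨n, hn⟩ := hc.elim_directed_cover B ho hD hm.directed_le
  exact (h n D hDo hDb hn).trans (subset_iUnion B n)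

lemma FullSet.preim {U S : Set ℂ} {f : ℂ → ℂ} (hU : IsOpen U) (hf : DifferentiableOn ℂ f U)
    (hUf : FullSet U) (hSf : FullSet S) : FullSet (U ∩ f ⁻¹' S) := by
  intro D hDo hDb hD
  have hDU : D ⊆ U := hUf D hDo hDb (hD.trans inter_subset_left)
  have hcU : closure D ⊆ U := by
    rw [closure_eq_self_union_frontier]
    exact union_subset hDU (hD.trans inter_subset_left)
  have hcc : IsCompact (closure D) := hDb.isCompact_closure
  have han : AnalyticOnNhd ℂ f U := hf.analyticOnNhd hU
  have hfc : IsCompact (f '' closure D) := hcc.image_of_continuousOn (hf.continuousOn.mono hcU)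
  have key : ∀ a ∈ D, f a ∉ S → f '' closure D ∈ 𝓝 (f a) := by
    intro a ha hfa
    rcases (han a (hDU ha)).eventually_constant_or_nhds_le_map_nhds with h | h
    · exfalso
      set Z := {z | z ∈ D ∧ ∀ᶠ w in 𝓝 z, f w = f a} with hZ
      have hZD : Z ⊆ D := fun z hz => hz.1
      have hZo : IsOpen Z := by
        rw [isOpen_iff_mem_nhds]
        rintro z ⟨h1, h2⟩
        filter_upwards [hDo.mem_nhds h1, h2.eventually_nhds] with y h3 h4
        exact ⟨h3, h4⟩
      have hZb := hDb.subset hZD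
      have hne : (frontier Z).Nonempty := by
        rw [nonempty_frontier_iff]
        refine ⟨⟨a, ha, h⟩, fun h0 => ?_⟩
        rw [h0] at hZb
        exact NormedSpace.unbounded_univ ℂ ℂ hZb
      obtain ⟨y, hy⟩ := hne
      rw [hZo.frontier_eq] at hy
      have hyD : y ∈ closure D := closure_mono hZD hy.1
      have hfr : ∃ᶠ w in 𝓝[≠] y, f w = f a := by
        rw [frequently_nhdsWithin_iff]
        refine (mem_closure_iff_frequently.mp hy.1).mono fun w hw => ⟨hw.2.self_of_nhds, ?_⟩
        rintro rfl
        exact hy.2 hw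
      have hev : ∀ᶠ w in 𝓝 y, f w = f a :=
        ((han y (hcU hyD)).frequently_eq_iff_eventually_eq analyticAt_const).mp hfr
      by_cases hyD' : y ∈ D
      · exact hy.2 ⟨hyD', hev⟩
      · have : y ∈ frontier D := by rw [hDo.frontier_eq]; exact ⟨hyD, hyD'⟩
        have := (hD this).2
        rw [mem_preimage, hev.self_of_nhds] at this
        exact hfa this
    · exact h (image_mem_map (mem_of_superset (hDo.mem_nhds ha) subset_closure))
  have h1 : interior (f '' closure D) ⊆ S := by
    refine hSf _ isOpen_interior (hfc.isBounded.subset interior_subset) ?_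
    intro y hy
    by_contra hyS
    rw [isOpen_interior.frontier_eq] at hy
    have hy1 : y ∈ f '' closure D := closure_minimal interior_subset hfc.isClosed hy.1
    obtain ⟨a, ha, rfl⟩ := hy1
    by_cases haD : a ∈ D
    · exact hy.2 (mem_interior_iff_mem_nhds.mpr (key a haD hyS))
    · have : a ∈ frontier D := by rw [hDo.frontier_eq]; exact ⟨ha, haD⟩
      exact hyS (hD this).2
  intro a ha
  refine ⟨hDU ha, ?_⟩
  by_contra hfa
  exact hfa (h1 (mem_interior_iff_mem_nhds.mpr (key a ha hfa)))

lemma no_log (b : ℂ) (R : ℝ) (hR : 0 < R) (k : ℂ → ℂ) (hk : Continuous k)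
    (h : ∀ z, ‖z - b‖ = R → Complex.exp (k z) = z - b) : False := by
  set p : ℝ → ℂ := fun θ => b + R * Complex.exp (θ * Complex.I) with hp
  have hpc : Continuous p := by fun_prop
  have hpe : ∀ θ, Complex.exp (k (p θ)) = R * Complex.exp (θ * Complex.I) := by
    intro θ
    rw [h]
    · simp [hp]
    · simp [hp, Complex.norm_exp_ofReal_mul_I, abs_of_pos hR]
  have hq : ∀ θ : ℝ, ∃ n : ℤ, k (p θ) - θ * Complex.I - Real.log R = n * (2 * Real.pi * Complex.I) := by
    intro θ
    rw [← Complex.exp_eq_one_iff, Complex.exp_sub, Complex.exp_sub, hpe, ← Complex.ofReal_exp,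
      Real.exp_log hR]
    have := Complex.exp_ne_zero (θ * Complex.I)
    have : (R : ℂ) ≠ 0 := by exact_mod_cast hR.ne'
    field_simp
  choose n hn using hq
  have hnc : Continuous n := by
    rw [Int.isClosedEmbedding_coe_real.isEmbedding.continuous_iff]
    have : (((↑) : ℤ → ℝ) ∘ n) = fun θ => (k (p θ) - θ * Complex.I - Real.log R).im / (2 * Real.pi) := by
      funext θ
      rw [hn]
      have := Real.pi_pos
      simp
    rw [this]
    fun_prop
  have hcst : n 0 = n (2 * Real.pi) := PreconnectedSpace.constant inferInstance hnc
  have h0 := hn 0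
  have h1 := hn (2 * Real.pi)
  have hpp : p (2 * Real.pi) = p 0 := by
    simp [hp, Complex.exp_two_pi_mul_I]
  rw [hpp, ← hcst, ← h0] at h1
  have := congrArg Complex.im h1
  have := Real.pi_pos
  simp at *

lemma fullSet_of_sc {S : Set ℂ} (hS : IsOpen S)
    (hsc : ∀ x ∈ S, SimplyConnectedSpace (connectedComponentIn S x)) : FullSet S := by
  intro D hDo hDb hD b hbD
  by_contra hbS
  have hl : ∀ x : ℂ, ∃ l : ℂ → ℂ, x ∈ S → ContinuousOn l (connectedComponentIn S x) ∧
      ∀ z ∈ connectedComponentIn S x, Complex.exp (l z) = z - b := by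
    intro x
    by_cases hx : x ∈ S
    · obtain ⟨l, h1, h2⟩ := Complex.exists_continuousOn_eqOn_exp_comp
        (U := connectedComponentIn S x) (hsc x hx) hS.connectedComponentIn
        (g := fun z => z - b) (by fun_prop) (by
          rintro ⟨z, hz, hzb⟩
          rw [sub_eq_zero] at hzb
          exact hbS (hzb ▸ connectedComponentIn_subset S x hz))
      exact ⟨l, fun _ => ⟨h1, h2⟩⟩
    · exact ⟨0, fun h => absurd h hx⟩
  choose l hl using hl
  -- choose a representative of each component
  have hrep : ∃ r : Set ℂ → ℂ, ∀ x ∈ S, r (connectedComponentIn S x) ∈ connectedComponentIn S x := by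
    classical
    refine ⟨fun A => if h : A.Nonempty then h.some else 0, fun x hx => ?_⟩
    have : (connectedComponentIn S x).Nonempty := ⟨x, mem_connectedComponentIn hx⟩
    simp only [this, dif_pos]
    exact this.some_mem
  obtain ⟨r, hr⟩ := hrep
  set L : ℂ → ℂ := fun z => l (r (connectedComponentIn S z)) z with hL
  have hrS : ∀ x ∈ S, r (connectedComponentIn S x) ∈ S :=
    fun x hx => connectedComponentIn_subset S x (hr x hx)
  have hLe : ∀ z ∈ S, Complex.exp (L z) = z - b := by
    intro z hz
    refine (hl _ (hrS z hz)).2 z ?_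
    rw [← connectedComponentIn_eq (hr z hz)]
    exact mem_connectedComponentIn hz
  have hLc : ContinuousOn L S := by
    intro z hz
    have h1 := (hl _ (hrS z hz)).1
    rw [← connectedComponentIn_eq (hr z hz)] at h1
    have hn := hS.connectedComponentIn.mem_nhds (mem_connectedComponentIn hz)
    have h2 := h1.continuousAt hn
    refine (h2.congr ?_).continuousWithinAt
    filter_upwards [hn] with w hw
    simp only [hL]
    rw [connectedComponentIn_eq hw]
  obtain ⟨T, hT⟩ := ContinuousMap.exists_restrict_eq (isClosed_frontier (s := D))
    (⟨(frontier D).domRestrict L, continuousOn_iff_continuous_domRestrict.mp (hLc.mono hD)⟩ : C(frontier D, ℂ))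
  have hT' : ∀ z ∈ frontier D, T z = L z := fun z hz => congrArg (fun g => g ⟨z, hz⟩) hT
  classical
  set h : ℂ → ℂ := fun z => if z ∈ D then Complex.exp (T z) else z - b with hh
  have hhc : Continuous h := by
    refine Continuous.if ?_ (by fun_prop) (by fun_prop)
    intro z hz
    rw [hT' z hz, hLe z (hD hz)]
  have hh0 : ∀ z, h z ≠ 0 := by
    intro z
    simp only [hh]
    split_ifs with hz
    · exact Complex.exp_ne_zero _
    · intro h0
      rw [sub_eq_zero] at h0
      exact hz (h0 ▸ hbD)
  obtain ⟨k, hk, hke⟩ := Complex.exists_continuousOn_eqOn_exp_comp (U := (univ : Set ℂ))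
    (g := h) (by
      have : ContractibleSpace (univ : Set ℂ) := (convex_univ).contractibleSpace ⟨0, trivial⟩
      exact (inferInstance : SimplyConnectedSpace (univ : Set ℂ))) isOpen_univ hhc.continuousOn
    (by rintro ⟨z, -, hz⟩; exact hh0 z hz)
  obtain ⟨R, hR⟩ := hDb.subset_ball b
  refine no_log b (max R 1) (by positivity) k (continuousOn_univ.mp hk) ?_
  intro z hz
  have := hke (mem_univ z)
  simp only [Function.comp] at this
  rw [this]
  simp only [hh]
  rw [if_neg]
  intro hzD
  have := hR hzD
  rw [mem_ball, dist_eq_norm, hz] at this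
  exact absurd this (not_lt.mpr (le_max_left _ _))

lemma conv_hom {W C : Set ℂ} (hC : Convex ℝ C) (hCW : C ⊆ W) {x y : W} (p q : Path x y)
    (hp : ∀ t, (p t : ℂ) ∈ C) (hq : ∀ t, (q t : ℂ) ∈ C) : p.Homotopic q := by
  refine ⟨⟨⟨⟨fun st => ⟨(1 - (st.1 : ℝ)) • (p st.2 : ℂ) + (st.1 : ℝ) • (q st.2 : ℂ), ?_⟩, ?_⟩, ?_, ?_⟩, ?_⟩⟩
  · exact hCW (hC (hp _) (hq _) (by linarith [st.1.2.2]) st.1.2.1 (by ring))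
  · apply Continuous.subtype_mk
    fun_prop
  · intro t; ext; simp
  · intro t; ext; simp
  · intro t z hz
    rcases hz with rfl | hz
    · ext; simp; ring
    · obtain rfl : z = 1 := hz
      ext; simp; ring

lemma seg_path {W C : Set ℂ} (hC : Convex ℝ C) (hCW : C ⊆ W) (x y : W) (hx : (x : ℂ) ∈ C)
    (hy : (y : ℂ) ∈ C) : ∃ p : Path x y, ∀ t, (p t : ℂ) ∈ C := by
  have h : ∀ t : unitInterval, (1 - (t : ℝ)) • (x : ℂ) + (t : ℝ) • (y : ℂ) ∈ C := fun t =>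
    hC hx hy (by linarith [t.2.2]) t.2.1 (by ring)
  refine ⟨⟨⟨fun t => ⟨_, hCW (h t)⟩, ?_⟩, ?_, ?_⟩, fun t => h t⟩
  · apply Continuous.subtype_mk
    fun_prop
  · ext; simp
  · ext; simp

open Path.Homotopic.Quotient in
lemma quot_aux1 {X : Type*} [TopologicalSpace X] {x0 x y z : X}
    (a : Path.Homotopic.Quotient x0 z) (d : Path.Homotopic.Quotient z y)
    (b : Path.Homotopic.Quotient x0 y) (c : Path.Homotopic.Quotient y x)
    (e : Path.Homotopic.Quotient x0 x) :
    ((a.trans d).trans b.symm).trans ((b.trans c).trans e.symm) =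
      (a.trans (d.trans c)).trans e.symm := by
  simp only [trans_assoc]
  rw [← trans_assoc b.symm b]
  simp

open Path.Homotopic.Quotient in
lemma quot_aux2 {X : Type*} [TopologicalSpace X] {x0 x : X}
    (a : Path.Homotopic.Quotient x0 x) (c : Path.Homotopic.Quotient x x)
    (h : (a.trans c).trans a.symm = refl x0) : c = refl x := by
  have : (a.symm.trans ((a.trans c).trans a.symm)).trans a = c := by
    simp only [trans_assoc]
    rw [← trans_assoc a.symm a]
    simp
  rw [← this, h]
  simp

open Path.Homotopic.Quotient in
lemma monodromy {W : Set ℂ} (hWo : IsOpen W) [PathConnectedSpace W] (x0 : W) :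
    ∃ m : ℂ → ℂ → FundamentalGroup W x0,
      (∀ C : Set ℂ, Convex ℝ C → C ⊆ W → ∀ x ∈ C, ∀ y ∈ C, ∀ z ∈ C, m x y * m y z = m x z) ∧
      ∀ (x : W) (γ : Path x x) (Φ : ℂ → FundamentalGroup W x0),
        (∀ t₀, ∀ᶠ t in 𝓝 t₀, Φ (γ t) = Φ (γ t₀) * m (γ t₀) (γ t)) →
        γ.Homotopic (Path.refl x) := by
  classical
  have hs : ∀ x y : W, ∃ s : Path.Homotopic.Quotient x y, ∀ C : Set ℂ, Convex ℝ C → C ⊆ W →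
      (x : ℂ) ∈ C → (y : ℂ) ∈ C → ∀ p : Path x y, (∀ t, (p t : ℂ) ∈ C) → mk p = s := by
    intro x y
    by_cases h : segment ℝ (x : ℂ) y ⊆ W
    · obtain ⟨p, hp⟩ := seg_path (convex_segment (x : ℂ) (y : ℂ)) h x y
        (left_mem_segment _ _ _) (right_mem_segment _ _ _)
      refine ⟨mk p, fun C hC hCW hx hy q hq => ?_⟩
      exact eq.mpr (conv_hom hC hCW q p hq (fun t => hC.segment_subset hx hy (hp t)))
    · refine ⟨mk (PathConnectedSpace.somePath x y), fun C hC hCW hx hy => ?_⟩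
      exact absurd ((hC.segment_subset hx hy).trans hCW) h
  choose s hs using hs
  have hss : ∀ C : Set ℂ, Convex ℝ C → C ⊆ W → ∀ x y z : W, (x : ℂ) ∈ C → (y : ℂ) ∈ C →
      (z : ℂ) ∈ C → (s x y).trans (s y z) = s x z := by
    intro C hC hCW x y z hx hy hz
    obtain ⟨p, hp⟩ := seg_path hC hCW x y hx hy
    obtain ⟨q, hq⟩ := seg_path hC hCW y z hy hz
    rw [← hs x y C hC hCW hx hy p hp, ← hs y z C hC hCW hy hz q hq, ← mk_trans]
    refine hs x z C hC hCW hx hz _ fun t => ?_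
    have : (p.trans q) t ∈ range p ∪ range q := by
      rw [← Path.trans_range]; exact mem_range_self t
    rcases this with ⟨t', h⟩ | ⟨t', h⟩
    · rw [← h]; exact hp t'
    · rw [← h]; exact hq t'
  let P : ∀ x : W, Path.Homotopic.Quotient x0 x := fun x => mk (PathConnectedSpace.somePath x0 x)
  let M : ∀ x y : W, Path.Homotopic.Quotient y x → FundamentalGroup W x0 := fun x y c =>
    FundamentalGroup.fromPath (((P y).trans c).trans (P x).symm)
  have hM : ∀ (x y z : W) c d, M x y c * M y z d = M x z (d.trans c) := by
    intro x y z c d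
    exact quot_aux1 _ _ _ _ _
  have hM1 : ∀ (x : W) (c), M x x c = 1 → c = refl x := by
    intro x c h
    exact quot_aux2 _ _ h
  refine ⟨fun x y => if h : x ∈ W ∧ y ∈ W then M ⟨x, h.1⟩ ⟨y, h.2⟩ (s _ _) else 1, ?_, ?_⟩
  · intro C hC hCW x hx y hy z hz
    simp only [hCW hx, hCW hy, hCW hz, and_self, dif_pos]
    rw [hM, hss C hC hCW _ _ _ hz hy hx]
  · intro x γ Φ hΦ
    simp only [Subtype.coe_prop, and_self, dif_pos] at hΦ
    let q : unitInterval → FundamentalGroup W x0 := fun t => M (γ 0) (γ t) (mk (γ.subpath t 0))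
    have hq : ∀ t₀, ∀ᶠ t in 𝓝 t₀, q t = q t₀ * M (γ t₀) (γ t) (s _ _) := by
      intro t₀
      obtain ⟨ε, hε, hb⟩ := Metric.isOpen_iff.mp hWo (γ t₀) (γ t₀).2
      have hc : ContinuousAt (fun t => (γ t : ℂ)) t₀ := by fun_prop
      have h1 := hc (Metric.ball_mem_nhds _ hε)
      obtain ⟨δ, hδ, hd⟩ := Metric.mem_nhds_iff.mp h1
      filter_upwards [Metric.ball_mem_nhds t₀ hδ] with t ht
      have hin : ∀ u, (γ.subpath t t₀ u : ℂ) ∈ Metric.ball (γ t₀ : ℂ) ε := by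
        intro u
        have : γ.subpath t t₀ u ∈ γ '' (uIcc t t₀) := by
          rw [← Path.range_subpath]; exact mem_range_self u
        obtain ⟨v, hv, hv'⟩ := this
        rw [← hv']
        apply hd
        have h3 : dist v t₀ ≤ dist t t₀ := by
          have h4 : (v : ℝ) ∈ uIcc (t : ℝ) t₀ := by
            rcases Set.mem_uIcc.mp hv with h | h
            · exact Set.mem_uIcc.mpr (Or.inl h)
            · exact Set.mem_uIcc.mpr (Or.inr h)
          have h5 := abs_sub_right_of_mem_uIcc h4
          rw [Subtype.dist_eq, Subtype.dist_eq, dist_comm, dist_comm (t : ℝ), Real.dist_eq,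
            Real.dist_eq]
          exact h5
        exact lt_of_le_of_lt h3 ht
      rw [hM, ← hs _ _ _ (convex_ball (γ t₀ : ℂ) ε) hb (by simpa using hin 0)
        (Metric.mem_ball_self hε) _ hin, ← mk_trans]
      simp only [q]
      congr 1
      exact (eq.mpr ⟨Path.Homotopy.subpathTransSubpath γ t t₀ 0⟩).symm
    have hl : IsLocallyConstant (fun t => Φ (γ t) * (q t)⁻¹) := by
      rw [IsLocallyConstant.iff_eventually_eq]
      intro t₀
      filter_upwards [hΦ t₀, hq t₀] with t h1 h2
      rw [h1, h2]
      group
    have h01 := hl.apply_eq_of_isPreconnected isPreconnected_univ (mem_univ (0:unitInterval)) (mem_univ 1)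
    have e : (γ 0 : ℂ) = γ 1 := by simp
    simp only [e, mul_right_inj, inv_inj] at h01
    have hq0 : q 0 = 1 := by
      have : ∀ a : Path.Homotopic.Quotient x0 (γ 0), (a.trans (refl _)).trans a.symm = refl x0 := by
        intro a; simp
      simp only [q, Path.subpath_self]
      exact this _
    rw [hq0] at h01
    have h2 : ∀ y z : W, ∀ (hy : y = x) (hz : z = x), ∀ c : Path.Homotopic.Quotient z y,
        M y z c = 1 → c.cast hz.symm hy.symm = refl x := by
      rintro y z rfl hz c h
      subst hz
      simpa using hM1 _ c h
    have h3 := h2 _ _ γ.source γ.target _ h01.symm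
    rw [← mk_cast, ← mk_refl, eq] at h3
    have h4 : (γ.subpath 1 0).cast γ.target.symm γ.source.symm = γ.symm := by
      rw [← Path.symm_subpath, Path.subpath_zero_one]
      ext t
      rfl
    rw [h4] at h3
    have := h3.symm₂
    simpa using this

lemma labels {Γ : Type*} [Group Γ] (a0 b0 : ℤ → ℤ → Γ) (bh bv : ℤ → ℤ → Prop) (d : ℤ × ℤ → ℕ)
    (T : Finset (ℤ × ℤ))
    (hT : ∀ c ∈ T, (bv c.1 c.2 ∧ d (c.1 - 1, c.2) < d c) ∨ (bv (c.1 + 1) c.2 ∧ d (c.1 + 1, c.2) < d c)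
      ∨ (bh c.1 c.2 ∧ d (c.1, c.2 - 1) < d c) ∨ (bh c.1 (c.2 + 1) ∧ d (c.1, c.2 + 1) < d c)) :
    ∃ a b : ℤ → ℤ → Γ, (∀ i j, ¬ bh i j → a i j = a0 i j) ∧ (∀ i j, ¬ bv i j → b i j = b0 i j) ∧
      ∀ c ∈ T, a c.1 c.2 * b (c.1 + 1) c.2 = b c.1 c.2 * a c.1 (c.2 + 1) := by
  classical
  induction T using Finset.strongInduction with
  | H T ih =>
    rcases T.eq_empty_or_nonempty with rfl | hne
    · exact ⟨a0, b0, by simp, by simp, by simp⟩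
    obtain ⟨c, hc, hmin⟩ := T.exists_min_image d hne
    obtain ⟨a, b, ha, hb, hab⟩ := ih (T.erase c) (Finset.erase_ssubset hc)
      (fun x hx => hT x (Finset.mem_of_mem_erase hx))
    obtain ⟨i, j⟩ := c
    have hab' : ∀ i' j', (i', j') ∈ T → ¬ (i' = i ∧ j' = j) →
        a i' j' * b (i' + 1) j' = b i' j' * a i' (j' + 1) := by
      intro i' j' h h'
      exact hab (i', j') (Finset.mem_erase.mpr ⟨by simpa using h', h⟩)
    have hno : ∀ i' j', d (i', j') < d (i, j) → (i', j') ∉ T := fun i' j' h h' =>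
      absurd (hmin _ h') (not_le.mpr h)
    rcases hT _ hc with ⟨h1, h2⟩ | ⟨h1, h2⟩ | ⟨h1, h2⟩ | ⟨h1, h2⟩ <;> simp only at h1 h2
    · have hn := hno _ _ h2
      refine ⟨a, fun p q => if p = i ∧ q = j then a i j * b (i + 1) j * (a i (j + 1))⁻¹ else b p q,
        ha, ?_, ?_⟩
      · intro p q hpq
        have : ¬ (p = i ∧ q = j) := by rintro ⟨rfl, rfl⟩; exact hpq h1
        simp [this, hb p q hpq]
      · rintro ⟨p, q⟩ hpq
        simp only
        by_cases h : p = i ∧ q = j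
        · obtain ⟨rfl, rfl⟩ := h
          simp
        · have h' : ¬ (p + 1 = i ∧ q = j) := by
            rintro ⟨rfl, rfl⟩; apply hn; simpa using hpq
          rw [if_neg h, if_neg h']
          exact hab' p q hpq h
    · have hn := hno _ _ h2
      refine ⟨a, fun p q => if p = i + 1 ∧ q = j then (a i j)⁻¹ * b i j * a i (j + 1) else b p q,
        ha, ?_, ?_⟩
      · intro p q hpq
        have : ¬ (p = i + 1 ∧ q = j) := by rintro ⟨rfl, rfl⟩; exact hpq h1
        simp [this, hb p q hpq]
      · rintro ⟨p, q⟩ hpq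
        simp only
        by_cases h : p = i ∧ q = j
        · obtain ⟨rfl, rfl⟩ := h
          simp [mul_assoc]
        · have h' : ¬ (p = i + 1 ∧ q = j) := by
            rintro ⟨rfl, rfl⟩; exact hn hpq
          have h'' : ¬ (p + 1 = i + 1 ∧ q = j) := by
            rintro ⟨h3, h4⟩; exact h ⟨by omega, h4⟩
          rw [if_neg h', if_neg h'']
          exact hab' p q hpq h
    · have hn := hno _ _ h2
      refine ⟨fun p q => if p = i ∧ q = j then b i j * a i (j + 1) * (b (i + 1) j)⁻¹ else a p q, b,
        ?_, hb, ?_⟩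
      · intro p q hpq
        have : ¬ (p = i ∧ q = j) := by rintro ⟨rfl, rfl⟩; exact hpq h1
        simp [this, ha p q hpq]
      · rintro ⟨p, q⟩ hpq
        simp only
        by_cases h : p = i ∧ q = j
        · obtain ⟨rfl, rfl⟩ := h
          simp
        · have h' : ¬ (p = i ∧ q + 1 = j) := by
            rintro ⟨rfl, rfl⟩; apply hn; simpa using hpq
          rw [if_neg h, if_neg h']
          exact hab' p q hpq h
    · have hn := hno _ _ h2
      refine ⟨fun p q => if p = i ∧ q = j + 1 then (b i j)⁻¹ * a i j * b (i + 1) j else a p q, b,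
        ?_, hb, ?_⟩
      · intro p q hpq
        have : ¬ (p = i ∧ q = j + 1) := by rintro ⟨rfl, rfl⟩; exact hpq h1
        simp [this, ha p q hpq]
      · rintro ⟨p, q⟩ hpq
        simp only
        by_cases h : p = i ∧ q = j
        · obtain ⟨rfl, rfl⟩ := h
          simp [mul_assoc]
        · have h' : ¬ (p = i ∧ q = j + 1) := by
            rintro ⟨rfl, rfl⟩; exact hn hpq
          have h'' : ¬ (p = i ∧ q + 1 = j + 1) := by
            rintro ⟨h3, h4⟩; exact h ⟨h3, by omega⟩
          rw [if_neg h', if_neg h'']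
          exact hab' p q hpq h

lemma potential_nat {Γ : Type*} [Group Γ] (a b : ℕ → ℕ → Γ) (N : ℕ)
    (h : ∀ i < N, ∀ j < N, a i j * b (i + 1) j = b i j * a i (j + 1)) :
    ∃ φ : ℕ → ℕ → Γ, (∀ i < N, ∀ j ≤ N, φ (i + 1) j = φ i j * a i j) ∧
      ∀ i j, φ i (j + 1) = φ i j * b i j := by
  let r : ℕ → Γ := fun m => Nat.rec 1 (fun k acc => acc * a k 0) m
  let φ : ℕ → ℕ → Γ := fun m n => Nat.rec (r m) (fun k acc => acc * b m k) n
  have hφ : ∀ i j, φ i (j + 1) = φ i j * b i j := fun i j => rfl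
  refine ⟨φ, ?_, hφ⟩
  intro i hi j
  induction j with
  | zero => intro _; rfl
  | succ j ih =>
    intro hj
    rw [hφ (i + 1) j, hφ i j, ih (by omega), mul_assoc, mul_assoc, h i hi j (by omega)]

lemma potential {Γ : Type*} [Group Γ] (a b : ℤ → ℤ → Γ) (N : ℕ)
    (h : ∀ i j, -(N : ℤ) ≤ i → i < N → -(N : ℤ) ≤ j → j < N →
      a i j * b (i + 1) j = b i j * a i (j + 1)) :
    ∃ φ : ℤ → ℤ → Γ, ∀ i j, -(N : ℤ) ≤ i → i < N → -(N : ℤ) ≤ j → j < N →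
      φ (i + 1) j = φ i j * a i j ∧ φ i (j + 1) = φ i j * b i j ∧
      φ (i + 1) (j + 1) = φ i j * (a i j * b (i + 1) j) := by
  obtain ⟨φ, h1, h2⟩ := potential_nat (fun i j => a (i - N) (j - N)) (fun i j => b (i - N) (j - N))
    (2 * N) (by
      intro i hi j hj
      have := h (i - N) (j - N) (by omega) (by omega) (by omega) (by omega)
      push_cast
      rw [show (i : ℤ) + 1 - N = i - N + 1 by ring, show (j : ℤ) + 1 - N = j - N + 1 by ring]
      exact this)
  refine ⟨fun i j => φ (i + N).toNat (j + N).toNat, ?_⟩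
  intro i j hi hi' hj hj'
  obtain ⟨m, rfl⟩ : ∃ m : ℕ, i = m - N := ⟨(i + N).toNat, by omega⟩
  obtain ⟨n, rfl⟩ : ∃ n : ℕ, j = n - N := ⟨(j + N).toNat, by omega⟩
  have e1 : ((m : ℤ) - N + N).toNat = m := by omega
  have e2 : ((n : ℤ) - N + N).toNat = n := by omega
  have e3 : ((m : ℤ) - N + 1 + N).toNat = m + 1 := by omega
  have e4 : ((n : ℤ) - N + 1 + N).toNat = n + 1 := by omega
  simp only [e1, e2, e3, e4]
  have h3 := h1 m (by omega) n (by omega)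
  refine ⟨h3, h2 m n, ?_⟩
  rw [h2, h3, mul_assoc]
  push_cast
  rw [show (m : ℤ) + 1 - N = m - N + 1 by ring]

/-- closed grid cell -/
def gcell (δ : ℝ) (c : ℤ × ℤ) : Set ℂ :=
  (Icc (δ * c.1) (δ * (c.1 + 1))) ×ℂ (Icc (δ * c.2) (δ * (c.2 + 1)))

lemma mem_gcell {δ : ℝ} {c : ℤ × ℤ} {z : ℂ} : z ∈ gcell δ c ↔
    (δ * c.1 ≤ z.re ∧ z.re ≤ δ * (c.1 + 1)) ∧ (δ * c.2 ≤ z.im ∧ z.im ≤ δ * (c.2 + 1)) := Iff.rfl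

lemma convex_gcell (δ : ℝ) (c : ℤ × ℤ) : Convex ℝ (gcell δ c) := by
  have h1 := (convex_Icc (δ * c.1) (δ * (c.1 + 1))).linear_preimage Complex.reLm
  have h2 := (convex_Icc (δ * c.2) (δ * (c.2 + 1))).linear_preimage Complex.imLm
  exact h1.inter h2

lemma compact_gcell (δ : ℝ) (c : ℤ × ℤ) : IsCompact (gcell δ c) :=
  isCompact_Icc.reProdIm isCompact_Icc

/-- floor cell -/
noncomputable def gfl (δ : ℝ) (z : ℂ) : ℤ × ℤ := (⌊z.re / δ⌋, ⌊z.im / δ⌋)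

lemma fl_bd {δ : ℝ} (hδ : 0 < δ) (x : ℝ) : δ * ⌊x / δ⌋ ≤ x ∧ x < δ * (⌊x / δ⌋ + 1) := by
  have h1 := Int.floor_le (x / δ)
  have h2 := Int.lt_floor_add_one (x / δ)
  rw [le_div_iff₀ hδ] at h1
  rw [div_lt_iff₀ hδ] at h2
  constructor <;> linarith

lemma mem_gfl {δ : ℝ} (hδ : 0 < δ) (z : ℂ) : z ∈ gcell δ (gfl δ z) :=
  ⟨⟨(fl_bd hδ _).1, (fl_bd hδ _).2.le⟩, ⟨(fl_bd hδ _).1, (fl_bd hδ _).2.le⟩⟩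

lemma fl_near {δ : ℝ} (hδ : 0 < δ) (x : ℝ) :
    ∀ᶠ y in 𝓝 x, δ * ⌊y / δ⌋ ≤ x ∧ x ≤ δ * (⌊y / δ⌋ + 1) := by
  have h1 : x < δ * (⌊x / δ⌋ + 1) := (fl_bd hδ x).2
  have h2 : δ * (⌈x / δ⌉ - 1) < x := by
    have := Int.ceil_lt_add_one (x / δ)
    have h3 : (⌈x / δ⌉ : ℝ) - 1 < x / δ := by linarith
    rw [lt_div_iff₀ hδ] at h3
    linarith
  filter_upwards [eventually_lt_nhds h1, eventually_gt_nhds h2] with y hy1 hy2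
  have hb := fl_bd hδ y
  constructor
  · have h3 : (⌊y / δ⌋ : ℝ) < ⌊x / δ⌋ + 1 := lt_of_mul_lt_mul_left (hb.1.trans_lt hy1) hδ.le
    have h4 : ⌊y / δ⌋ ≤ ⌊x / δ⌋ := by
      have : ⌊y / δ⌋ < ⌊x / δ⌋ + 1 := by exact_mod_cast h3
      omega
    have h5 : (⌊y / δ⌋ : ℝ) ≤ ⌊x / δ⌋ := by exact_mod_cast h4
    exact (mul_le_mul_of_nonneg_left h5 hδ.le).trans (fl_bd hδ x).1
  · have h3 : (⌈x / δ⌉ : ℝ) - 1 < ⌊y / δ⌋ + 1 := lt_of_mul_lt_mul_left (hy2.trans hb.2) hδ.le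
    have h4 : ⌈x / δ⌉ ≤ ⌊y / δ⌋ + 1 := by
      have : ⌈x / δ⌉ - 1 < ⌊y / δ⌋ + 1 := by exact_mod_cast h3
      omega
    have h5 : (⌈x / δ⌉ : ℝ) ≤ ⌊y / δ⌋ + 1 := by exact_mod_cast h4
    have h6 := Int.le_ceil (x / δ)
    rw [div_le_iff₀ hδ] at h6
    nlinarith

lemma gfl_near {δ : ℝ} (hδ : 0 < δ) (z : ℂ) : ∀ᶠ w in 𝓝 z, z ∈ gcell δ (gfl δ w) := by
  filter_upwards [(Complex.continuous_re.tendsto z).eventually (fl_near hδ z.re),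
    (Complex.continuous_im.tendsto z).eventually (fl_near hδ z.im)] with w h1 h2
  exact ⟨h1, h2⟩

lemma idx_near {δ : ℝ} (hδ : 0 < δ) {x : ℝ} {i j : ℤ} (h1 : δ * i ≤ x) (h2 : x ≤ δ * (j + 1)) :
    i ≤ j + 1 := by
  have : (i : ℝ) ≤ j + 1 := le_of_mul_le_mul_left (h1.trans h2) hδ
  exact_mod_cast this

inductive Reach {α : Type*} (far : α → Prop) (adj : α → α → Prop) : ℕ → α → Prop
  | base (c : α) : far c → Reach far adj 0 c
  | step (n : ℕ) (c c' : α) : adj c c' → Reach far adj n c' → Reach far adj (n + 1) c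

/-- adjacency of cells through a point outside `W` -/
def gadj (δ : ℝ) (W : Set ℂ) (c c' : ℤ × ℤ) : Prop :=
  (c' = (c.1 - 1, c.2) ∨ c' = (c.1 + 1, c.2) ∨ c' = (c.1, c.2 - 1) ∨ c' = (c.1, c.2 + 1)) ∧
    ∃ z, z ∉ W ∧ z ∈ gcell δ c ∧ z ∈ gcell δ c'

lemma reach_all {W : Set ℂ} (hW : FullSet W) {δ : ℝ} (hδ : 0 < δ) (far : ℤ × ℤ → Prop)
    (hfin : {c | ¬ far c}.Finite) (c : ℤ × ℤ) (y : ℂ) (hy : y ∉ W) (hyc : y ∈ gcell δ c) :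
    ∃ n, Reach far (gadj δ W) n c := by
  by_contra hcon
  set R : ℤ × ℤ → Prop := fun c => ∃ n, Reach far (gadj δ W) n c with hR
  have hstep : ∀ c c', gadj δ W c c' → R c' → R c := fun c c' h ⟨n, hn⟩ => ⟨n + 1, .step n c c' h hn⟩
  have hprop : ∀ c c' : ℤ × ℤ, ∀ z, z ∉ W → z ∈ gcell δ c → z ∈ gcell δ c' → R c' → R c := by
    rintro ⟨i, j⟩ ⟨i', j'⟩ z hz h1 h2 hr
    have h3 : z ∈ gcell δ (i', j) := ⟨h2.1, h1.2⟩
    have a1 := idx_near hδ h1.1.1 h2.1.2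
    have a2 := idx_near hδ h2.1.1 h1.1.2
    have a3 := idx_near hδ h1.2.1 h2.2.2
    have a4 := idx_near hδ h2.2.1 h1.2.2
    simp only at a1 a2 a3 a4
    have hr1 : R (i', j) := by
      by_cases e : j = j'
      · rw [e]; exact hr
      · refine hstep _ (i', j') ⟨?_, z, hz, h3, h2⟩ hr
        have : j' = j - 1 ∨ j' = j + 1 := by omega
        rcases this with h | h <;> simp [h]
    by_cases e : i = i'
    · rw [e]; exact hr1
    · refine hstep _ (i', j) ⟨?_, z, hz, h1, h3⟩ hr1
      have : i' = i - 1 ∨ i' = i + 1 := by omega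
      rcases this with h | h <;> simp [h]
  set Nn : Set (ℤ × ℤ) := {c | ¬ R c} with hN
  have hNf : Nn.Finite := hfin.subset fun c hc hf => hc ⟨0, .base c hf⟩
  set C : Set ℂ := ⋃ c ∈ Nn, gcell δ c with hC
  have hCc : IsCompact C := hNf.isCompact_biUnion fun c _ => compact_gcell δ c
  have hint : ∀ z ∈ C, z ∉ W → z ∈ interior C := by
    intro z hz hzW
    obtain ⟨c, hc, hzc⟩ := mem_iUnion₂.mp hz
    rw [mem_interior_iff_mem_nhds]
    filter_upwards [gfl_near hδ z] with w hw
    exact mem_iUnion₂.mpr ⟨gfl δ w, fun hr => hc (hprop c _ z hzW hzc hw hr), mem_gfl hδ w⟩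
  have hsub : interior C ⊆ W := by
    refine hW _ isOpen_interior (hCc.isBounded.subset interior_subset) ?_
    intro z hz
    by_contra hzW
    rw [isOpen_interior.frontier_eq] at hz
    exact hz.2 (hint z (closure_minimal interior_subset hCc.isClosed hz.1) hzW)
  exact hy (hsub (hint y (mem_iUnion₂.mpr ⟨c, hcon, hyc⟩) hy))

lemma exists_depth {W : Set ℂ} (hW : FullSet W) {δ : ℝ} (hδ : 0 < δ) (far : ℤ × ℤ → Prop)
    (hfin : {c | ¬ far c}.Finite) :
    ∃ d : ℤ × ℤ → ℕ, ∀ c, ¬ far c → ¬ gcell δ c ⊆ W → ∃ c', gadj δ W c c' ∧ d c' < d c := by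
  classical
  refine ⟨fun c => sInf {n | Reach far (gadj δ W) n c}, ?_⟩
  intro c hc hcW
  obtain ⟨y, hyc, hy⟩ := not_subset.mp hcW
  have hne : {n | Reach far (gadj δ W) n c}.Nonempty := reach_all hW hδ far hfin c y hy hyc
  have h1 := Nat.sInf_mem hne
  generalize hs : sInf {n | Reach far (gadj δ W) n c} = n at h1
  cases h1 with
  | base _ h => exact absurd h hc
  | step n _ c' h h' =>
    refine ⟨c', h, ?_⟩
    simp only [hs]
    exact Nat.lt_succ_of_le (Nat.sInf_le h')

def gv (δ : ℝ) (i j : ℤ) : ℂ := ⟨δ * i, δ * j⟩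

lemma gv_mem {δ : ℝ} (hδ : 0 < δ) {i j i' j' : ℤ} (h1 : i ≤ i') (h2 : i' ≤ i + 1) (h3 : j ≤ j')
    (h4 : j' ≤ j + 1) : gv δ i' j' ∈ gcell δ (i, j) := by
  have h1' : (i : ℝ) ≤ i' := by exact_mod_cast h1
  have h2' : (i' : ℝ) ≤ i + 1 := by exact_mod_cast h2
  have h3' : (j : ℝ) ≤ j' := by exact_mod_cast h3
  have h4' : (j' : ℝ) ≤ j + 1 := by exact_mod_cast h4
  refine ⟨⟨?_, ?_⟩, ⟨?_, ?_⟩⟩ <;> simp only [gv] <;> gcongr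

lemma grid {Γ : Type*} [Group Γ] {W : Set ℂ} (hW : FullSet W) {δ : ℝ} (hδ : 0 < δ) (N : ℕ)
    (m : ℂ → ℂ → Γ)
    (hm : ∀ C : Set ℂ, Convex ℝ C → C ⊆ W → ∀ x ∈ C, ∀ y ∈ C, ∀ z ∈ C, m x y * m y z = m x z) :
    ∃ φ : ℤ → ℤ → Γ, ∀ i j, -(N : ℤ) ≤ i → i < N → -(N : ℤ) ≤ j → j < N → gcell δ (i, j) ⊆ W →
      ∀ i' j', i ≤ i' → i' ≤ i + 1 → j ≤ j' → j' ≤ j + 1 →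
        φ i' j' = φ i j * m (gv δ i j) (gv δ i' j') := by
  classical
  set far : ℤ × ℤ → Prop := fun c => ¬ (c ∈ (Finset.Ico (-(N : ℤ)) N) ×ˢ (Finset.Ico (-(N : ℤ)) N))
    with hfar
  have hfin : {c | ¬ far c}.Finite := by
    simp only [hfar, not_not]
    exact Finset.finite_toSet _
  obtain ⟨d, hd⟩ := exists_depth hW hδ far hfin
  set T := ((Finset.Ico (-(N : ℤ)) N) ×ˢ (Finset.Ico (-(N : ℤ)) N)).filter
    (fun c => ¬ gcell δ c ⊆ W) with hT
  obtain ⟨a, b, ha, hb, hab⟩ := labels (fun i j => m (gv δ i j) (gv δ (i + 1) j))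
    (fun i j => m (gv δ i j) (gv δ i (j + 1)))
    (fun i j => ∃ z, z ∉ W ∧ z ∈ gcell δ (i, j - 1) ∧ z ∈ gcell δ (i, j))
    (fun i j => ∃ z, z ∉ W ∧ z ∈ gcell δ (i - 1, j) ∧ z ∈ gcell δ (i, j)) d T (by
      intro c hc
      obtain ⟨hc1, hc2⟩ := Finset.mem_filter.mp hc
      obtain ⟨c', ⟨h1, z, hz, hz1, hz2⟩, h2⟩ := hd c (not_not.mpr hc1) hc2
      rcases h1 with rfl | rfl | rfl | rfl
      · exact Or.inl ⟨⟨z, hz, hz2, hz1⟩, h2⟩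
      · exact Or.inr (Or.inl ⟨⟨z, hz, by simpa using hz1, hz2⟩, h2⟩)
      · exact Or.inr (Or.inr (Or.inl ⟨⟨z, hz, hz2, hz1⟩, h2⟩))
      · exact Or.inr (Or.inr (Or.inr ⟨⟨z, hz, by simpa using hz1, hz2⟩, h2⟩)))
  have hgood : ∀ i j, gcell δ (i, j) ⊆ W → a i j = m (gv δ i j) (gv δ (i + 1) j) ∧
      b i j = m (gv δ i j) (gv δ i (j + 1)) ∧
      a i (j + 1) = m (gv δ i (j + 1)) (gv δ (i + 1) (j + 1)) ∧
      b (i + 1) j = m (gv δ (i + 1) j) (gv δ (i + 1) (j + 1)) := by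
    intro i j h
    refine ⟨ha _ _ ?_, hb _ _ ?_, ha _ _ ?_, hb _ _ ?_⟩
    · rintro ⟨z, hz, h1, h2⟩; exact hz (h h2)
    · rintro ⟨z, hz, h1, h2⟩; exact hz (h h2)
    · rintro ⟨z, hz, h1, h2⟩; exact hz (h (by simpa using h1))
    · rintro ⟨z, hz, h1, h2⟩; exact hz (h (by simpa using h1))
  have hmm : ∀ i j, gcell δ (i, j) ⊆ W → a i j * b (i + 1) j = m (gv δ i j) (gv δ (i + 1) (j + 1)) ∧
      b i j * a i (j + 1) = m (gv δ i j) (gv δ (i + 1) (j + 1)) := by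
    intro i j h
    obtain ⟨h1, h2, h3, h4⟩ := hgood i j h
    rw [h1, h2, h3, h4]
    constructor <;>
    · apply hm _ (convex_gcell δ (i, j)) h <;> apply gv_mem hδ <;> omega
  obtain ⟨φ, hφ⟩ := potential a b N (by
    intro i j h1 h2 h3 h4
    by_cases h : gcell δ (i, j) ⊆ W
    · rw [(hmm i j h).1, (hmm i j h).2]
    · exact hab (i, j) (by simp [*]))
  refine ⟨φ, ?_⟩
  intro i j h1 h2 h3 h4 h i' j' e1 e2 e3 e4
  obtain ⟨p1, p2, p3⟩ := hφ i j h1 h2 h3 h4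
  obtain ⟨q1, q2, q3, q4⟩ := hgood i j h
  have hi : i' = i ∨ i' = i + 1 := by omega
  have hj : j' = j ∨ j' = j + 1 := by omega
  rcases hi with rfl | rfl <;> rcases hj with rfl | rfl
  · have hv : gv δ i' j' ∈ gcell δ (i', j') := by apply gv_mem hδ <;> omega
    have := hm _ (convex_gcell δ (i', j')) h _ hv _ hv _ hv
    rw [mul_eq_left] at this
    rw [this, mul_one]
  · rw [p2, q2]
  · rw [p1, q1]
  · rw [p3, (hmm _ _ h).1]

lemma sc_of_full {W : Set ℂ} (hWo : IsOpen W) (hWc : IsConnected W) (hW : FullSet W) :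
    SimplyConnectedSpace W := by
  have hpc : IsPathConnected W := hWo.isConnected_iff_isPathConnected.mp hWc
  have : PathConnectedSpace W := isPathConnected_iff_pathConnectedSpace.mp hpc
  rw [simply_connected_iff_loops_nullhomotopic]
  refine ⟨this, fun x γ => ?_⟩
  obtain ⟨m, hm, hloop⟩ := monodromy hWo x
  have hKc : IsCompact (range fun t => (γ t : ℂ)) := isCompact_range (by fun_prop)
  obtain ⟨ε, hε, hεW⟩ := hKc.exists_thickening_subset_open hWo (by
    rintro _ ⟨t, rfl⟩; exact (γ t).2)
  obtain ⟨r, hr⟩ := hKc.isBounded.exists_norm_le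
  set δ := ε / 3 with hδd
  have hδ : 0 < δ := by positivity
  obtain ⟨N, hN⟩ := exists_nat_gt (r / δ)
  rw [div_lt_iff₀ hδ] at hN
  obtain ⟨φ, hφ⟩ := grid hW hδ N m hm
  have hcell : ∀ t, gcell δ (gfl δ (γ t)) ⊆ W := by
    intro t w hw
    apply hεW
    rw [mem_thickening_iff]
    refine ⟨γ t, mem_range_self t, ?_⟩
    have h1 := mem_gfl hδ (γ t : ℂ)
    obtain ⟨⟨a1, a2⟩, a3, a4⟩ := mem_gcell.mp h1
    obtain ⟨⟨b1, b2⟩, b3, b4⟩ := mem_gcell.mp hw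
    have h2 := Complex.norm_le_abs_re_add_abs_im (w - γ t)
    have h3 : |(w - γ t).re| ≤ δ := by
      rw [Complex.sub_re, abs_le]; constructor <;> linarith
    have h4 : |(w - γ t).im| ≤ δ := by
      rw [Complex.sub_im, abs_le]; constructor <;> linarith
    rw [dist_eq_norm]
    linarith
  have hrange : ∀ x : ℝ, |x| ≤ r → -(N : ℤ) ≤ ⌊x / δ⌋ ∧ ⌊x / δ⌋ < N := by
    intro x hx
    have hb := fl_bd hδ x
    rw [abs_le] at hx
    constructor
    · have : (-(N : ℤ) : ℝ) < ⌊x / δ⌋ + 1 := by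
        refine lt_of_mul_lt_mul_left (a := δ) ?_ hδ.le
        push_cast
        linarith
      have : -(N : ℤ) < ⌊x / δ⌋ + 1 := by exact_mod_cast this
      omega
    · have : (⌊x / δ⌋ : ℝ) < N := by
        refine lt_of_mul_lt_mul_left (a := δ) ?_ hδ.le
        linarith
      exact_mod_cast this
  refine hloop x γ (fun z => φ (gfl δ z).1 (gfl δ z).2 * m (gv δ (gfl δ z).1 (gfl δ z).2) z) ?_
  intro t₀
  have hc : ContinuousAt (fun t => (γ t : ℂ)) t₀ := by fun_prop
  filter_upwards [hc.eventually (gfl_near hδ (γ t₀ : ℂ))] with t ht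
  have hcW := hcell t
  have hzc := mem_gfl hδ (γ t : ℂ)
  have hz0 := mem_gfl hδ (γ t₀ : ℂ)
  have hbd : ‖(γ t : ℂ)‖ ≤ r := hr _ (mem_range_self t)
  obtain ⟨r1, r2⟩ := hrange (γ t : ℂ).re ((Complex.abs_re_le_norm _).trans hbd)
  obtain ⟨r3, r4⟩ := hrange (γ t : ℂ).im ((Complex.abs_im_le_norm _).trans hbd)
  change -(N : ℤ) ≤ (gfl δ (γ t)).1 at r1
  change (gfl δ (γ t)).1 < _ at r2
  change -(N : ℤ) ≤ (gfl δ (γ t)).2 at r3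
  change (gfl δ (γ t)).2 < _ at r4
  have k1 : (gfl δ (γ t)).1 ≤ (gfl δ (γ t₀)).1 := by
    have h1 := ht.1.1
    have h2 := (fl_bd hδ (γ t₀ : ℂ).re).2
    have h3 := lt_of_mul_lt_mul_left (h1.trans_lt h2) hδ.le
    have h4 : (gfl δ (γ t)).1 < (gfl δ (γ t₀)).1 + 1 := by exact_mod_cast h3
    omega
  have k3 : (gfl δ (γ t)).2 ≤ (gfl δ (γ t₀)).2 := by
    have h1 := ht.2.1
    have h2 := (fl_bd hδ (γ t₀ : ℂ).im).2
    have h3 := lt_of_mul_lt_mul_left (h1.trans_lt h2) hδ.le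
    have h4 : (gfl δ (γ t)).2 < (gfl δ (γ t₀)).2 + 1 := by exact_mod_cast h3
    omega
  have k2 := idx_near hδ hz0.1.1 ht.1.2
  have k4 := idx_near hδ hz0.2.1 ht.2.2
  generalize gfl δ (γ t) = c at *
  generalize gfl δ (γ t₀) = c₀ at *
  obtain ⟨i, j⟩ := c
  obtain ⟨i', j'⟩ := c₀
  simp only at r1 r2 r3 r4 k1 k2 k3 k4 ⊢
  have hv : gv δ i j ∈ gcell δ (i, j) := by apply gv_mem hδ <;> omega
  have hv' : gv δ i' j' ∈ gcell δ (i, j) := by apply gv_mem hδ <;> omega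
  rw [hφ i j r1 r2 r3 r4 hcW i' j' k1 k2 k3 k4, mul_assoc, mul_assoc,
    hm _ (convex_gcell δ (i, j)) hcW _ hv' _ ht _ hzc,
    hm _ (convex_gcell δ (i, j)) hcW _ hv _ hv' _ hzc]

/-- let `U ⊆ ℂ` be open with all connected components simply connected,
`f : U → ℂ` holomorphic, and `P ⊆ U` open with `f(P) ⊆ P` and all components simply
connected. Let `B` be the set of points whose orbit stays in `U` until entering `P`.
Then every connected component of `B` is simply connected. -/
theorem stmt_14 (U : Set ℂ) (hU : IsOpen U)
    (hUsc : ∀ x ∈ U, SimplyConnectedSpace (connectedComponentIn U x))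
    (f : ℂ → ℂ) (hf : DifferentiableOn ℂ f U)
    (P : Set ℂ) (hP : IsOpen P) (hPU : P ⊆ U) (hPf : f '' P ⊆ P)
    (hPsc : ∀ x ∈ P, SimplyConnectedSpace (connectedComponentIn P x))
    (B : Set ℂ)
    (hB : B = {z : ℂ | ∃ n : ℕ, (∀ k < n, f^[k] z ∈ U) ∧ f^[n] z ∈ P}) :
    ∀ x ∈ B, SimplyConnectedSpace (connectedComponentIn B x) := by
  let A : ℕ → Set ℂ := fun n => {z | (∀ k < n, f^[k] z ∈ U) ∧ f^[n] z ∈ P}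
  have hA0 : A 0 = P := by ext z; simp [A]
  have hAs : ∀ n, A (n + 1) = U ∩ f ⁻¹' (A n) := by
    intro n
    ext z
    simp only [A, mem_setOf_eq, mem_inter_iff, mem_preimage, ← Function.iterate_succ_apply]
    constructor
    · rintro ⟨h1, h2⟩
      exact ⟨h1 0 (by omega), fun k hk => h1 (k + 1) (by omega), h2⟩
    · rintro ⟨h0, h1, h2⟩
      refine ⟨fun k hk => ?_, h2⟩
      cases k with
      | zero => exact h0
      | succ k => exact h1 k (by omega)
  have hBA : B = ⋃ n, A n := by
    rw [hB]; ext z; simp [A]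
  have hmono : Monotone A := by
    refine monotone_nat_of_le_succ fun n z hz => ⟨fun k hk => ?_, ?_⟩
    · rcases Nat.lt_succ_iff_lt_or_eq.mp hk with h | rfl
      · exact hz.1 k h
      · exact hPU hz.2
    · rw [Function.iterate_succ_apply']
      exact hPf (mem_image_of_mem f hz.2)
  have hfull : ∀ n, IsOpen (A n) ∧ FullSet (A n) := by
    intro n
    induction n with
    | zero => rw [hA0]; exact ⟨hP, fullSet_of_sc hP hPsc⟩
    | succ n ih =>
      rw [hAs]
      exact ⟨hf.continuousOn.isOpen_inter_preimage hU ih.1,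
        FullSet.preim hU hf (fullSet_of_sc hU hUsc) ih.2⟩
  have hBo : IsOpen B := by rw [hBA]; exact isOpen_iUnion fun n => (hfull n).1
  have hBf : FullSet B := by
    rw [hBA]; exact FullSet.iUnion hmono (fun n => (hfull n).1) (fun n => (hfull n).2)
  intro x hx
  exact sc_of_full hBo.connectedComponentIn (isConnected_connectedComponentIn_iff.mpr hx)
    (hBf.comp hBo x)
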